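/- Let M be a qDTMC, Φ a negation-free state formula, and θ ∈ [0,1]. The formula Pr_{≥θ}(X Φ) evaluates to T in the qDTMC M (i.e., µ{π ∈ Path(s_init) : (π, X Φ) = T in M} ≥ θ) if and only if s_init satisfies Pr_{≥θ}(X Φ) under standard two-valued PCTL semantics in the binary DTMC M^(1) obtained from M by relabeling every ? to F. -/

import Mathlib

open MeasureTheory

/-- Three truth values: `F` (false), `Q` (unknown, "?"), `T` (true). -/
inductive TV : Type
  | F : TV
  | Q : TV
  | T : TV
  deriving DecidableEq

namespace TV

/-- Kleene's strong three-valued negation. -/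
def not : TV → TV
  | T => F
  | Q => Q
  | F => T

/-- Kleene's strong three-valued conjunction (min w.r.t. F < ? < T). -/
def and : TV → TV → TV
  | T, x => x
  | Q, T => Q
  | Q, Q => Q
  | Q, F => F
  | F, _ => F

/-- Kleene's strong three-valued disjunction (max w.r.t. F < ? < T). -/
def or : TV → TV → TV
  | T, _ => T
  | Q, T => T
  | Q, Q => Q
  | Q, F => Q
  | F, x => x

end TV

/-- Negation-free state formulas: built from atomic propositions and the
constants T, F using ∧ and ∨. -/
inductive SForm (AP : Type) : Type
  | tt : SForm AP
  | ff : SForm AP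
  | atom : AP → SForm AP
  | and : SForm AP → SForm AP → SForm AP
  | or : SForm AP → SForm AP → SForm AP

/-- Three-valued (Kleene) evaluation of a negation-free state formula in a state,
given a three-valued labeling `L`. -/
def sEval {S AP : Type} (L : S → AP → TV) : SForm AP → S → TV
  | SForm.tt, _ => TV.T
  | SForm.ff, _ => TV.F
  | SForm.atom a, s => L s a
  | SForm.and φ ψ, s => (sEval L φ s).and (sEval L ψ s)
  | SForm.or φ ψ, s => (sEval L φ s).or (sEval L ψ s)

/-- Standard two-valued evaluation of a state formula in a binary DTMC
with (two-valued) labeling `Lb`. -/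
def sSat {S AP : Type} (Lb : S → AP → Prop) : SForm AP → S → Prop
  | SForm.tt, _ => True
  | SForm.ff, _ => False
  | SForm.atom a, s => Lb s a
  | SForm.and φ ψ, s => sSat Lb φ s ∧ sSat Lb ψ s
  | SForm.or φ ψ, s => sSat Lb φ s ∨ sSat Lb ψ s

/-- A qDTMC: a DTMC with three-valued labeling.  The transition function takes
values in [0,1] (here: `NNReal`, with each row summing to 1, hence each entry ≤ 1). -/
structure qDTMC (S AP : Type) [Fintype S] : Type where
  P : S → S → NNReal
  stoch : ∀ s : S, (∑ s' : S, P s s') = 1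
  init : S
  L : S → AP → TV

namespace qDTMC

variable {S AP : Type} [Fintype S]

/-- `π` is a path of `M` starting at `s`. -/
def IsPath (M : qDTMC S AP) (s : S) (π : ℕ → S) : Prop :=
  π 0 = s ∧ ∀ i : ℕ, 0 < M.P (π i) (π (i + 1))

/-- The binary labeling of M⁽¹⁾: every `?` is relabeled to false. -/
def L1 (M : qDTMC S AP) : S → AP → Prop := fun s a => M.L s a = TV.T

/-- The binary labeling of M⁽²⁾: every `?` is relabeled to true. -/
def L2 (M : qDTMC S AP) : S → AP → Prop := fun s a => M.L s a ≠ TV.F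

/-- `μ` is the probability measure on paths of `M` from `s`, determined on cylinder
sets by the products of transition probabilities. -/
def IsPathMeasure [MeasurableSpace S] (M : qDTMC S AP) (s : S)
    (μ : Measure (ℕ → S)) : Prop :=
  IsProbabilityMeasure μ ∧
  ∀ (n : ℕ) (ω : ℕ → S), ω 0 = s →
    μ {π : ℕ → S | ∀ i ≤ n, π i = ω i} =
      ∏ i ∈ Finset.range n, (M.P (ω i) (ω (i + 1)) : ENNReal)

end qDTMC

/-- Path formulas: X Φ, Φ₁ U^{≤k} Φ₂ and Φ₁ U Φ₂ over negation-free state formulas. -/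
inductive PForm (AP : Type) : Type
  | next : SForm AP → PForm AP
  | buntil : SForm AP → ℕ → SForm AP → PForm AP
  | uuntil : SForm AP → SForm AP → PForm AP

open Classical in
/-- Three-valued evaluation of a path formula on a path `π`. -/
noncomputable def pEval {S AP : Type} (L : S → AP → TV) : PForm AP → (ℕ → S) → TV
  | PForm.next Φ, π => sEval L Φ (π 1)
  | PForm.buntil Φ1 k Φ2, π =>
      if ∃ i ≤ k, sEval L Φ2 (π i) = TV.T ∧ ∀ i' < i, sEval L Φ1 (π i') = TV.T then TV.T
      else if (∀ i ≤ k, sEval L Φ2 (π i) = TV.F) ∨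
          (∃ i ≤ k, sEval L Φ2 (π i) ≠ TV.F ∧ ∃ i' < i, sEval L Φ1 (π i') = TV.F) then TV.F
      else TV.Q
  | PForm.uuntil Φ1 Φ2, π =>
      if ∃ i, sEval L Φ2 (π i) = TV.T ∧ ∀ i' < i, sEval L Φ1 (π i') = TV.T then TV.T
      else if (∀ i, sEval L Φ2 (π i) = TV.F) ∨
          (∃ i, sEval L Φ2 (π i) ≠ TV.F ∧ ∃ i' < i, sEval L Φ1 (π i') = TV.F) then TV.F
      else TV.Q

/-- Standard two-valued PCTL path satisfaction in a binary DTMC with labeling `Lb`. -/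
def pSat {S AP : Type} (Lb : S → AP → Prop) : PForm AP → (ℕ → S) → Prop
  | PForm.next Φ, π => sSat Lb Φ (π 1)
  | PForm.buntil Φ1 k Φ2, π => ∃ i ≤ k, sSat Lb Φ2 (π i) ∧ ∀ i' < i, sSat Lb Φ1 (π i')
  | PForm.uuntil Φ1 Φ2, π => ∃ i, sSat Lb Φ2 (π i) ∧ ∀ i' < i, sSat Lb Φ1 (π i')

/-!
Kleene's ∧ and ∨ are the minimum and maximum for `F < ? < T`, so the cut `v ↦ (v = T)` preserves
both: asking whether a negation-free formula evaluates to `T` amounts to relabeling every `?` to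
`F` first and then evaluating classically. This passes from states to paths, because the temporal
operators yield `T` exactly when the classical clause holds of the values `T`. As relabeling does
not affect the transition probabilities, `Pr_{≥θ}` is about one and the same event in `M` and
`M⁽¹⁾`.
-/

namespace TV

theorem and_eq_T_iff (v w : TV) : v.and w = T ↔ v = T ∧ w = T := by
  cases v <;> cases w <;> decide

theorem or_eq_T_iff (v w : TV) : v.or w = T ↔ v = T ∨ w = T := by
  cases v <;> cases w <;> decide

end TV

section Labeling

variable {S AP : Type} (L : S → AP → TV)

theorem sEval_eq_T_iff (Φ : SForm AP) (s : S) :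
    sEval L Φ s = TV.T ↔ sSat (fun s a => L s a = TV.T) Φ s := by
  induction Φ with
  | tt => exact iff_of_true rfl trivial
  | ff => exact iff_of_false TV.noConfusion id
  | atom a => exact Iff.rfl
  | and φ ψ ihφ ihψ => exact (TV.and_eq_T_iff _ _).trans (and_congr ihφ ihψ)
  | or φ ψ ihφ ihψ => exact (TV.or_eq_T_iff _ _).trans (or_congr ihφ ihψ)

open Classical in
theorem pEval_eq_T_iff (ψ : PForm AP) (π : ℕ → S) :
    pEval L ψ π = TV.T ↔ pSat (fun s a => L s a = TV.T) ψ π := by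
  cases ψ with
  | next Φ => exact sEval_eq_T_iff L Φ (π 1)
  | buntil Φ₁ k Φ₂ =>
    simp only [pEval, pSat, ← sEval_eq_T_iff]
    rw [Ne.ite_eq_left_iff]
    split_ifs <;> decide
  | uuntil Φ₁ Φ₂ =>
    simp only [pEval, pSat, ← sEval_eq_T_iff]
    rw [Ne.ite_eq_left_iff]
    split_ifs <;> decide

end Labeling

theorem stmt1_general {S AP : Type} [Fintype S] (M : qDTMC S AP) (s : S) (ψ : PForm AP) :
    {π : ℕ → S | M.IsPath s π ∧ pEval M.L ψ π = TV.T} =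
      {π : ℕ → S | M.IsPath s π ∧ pSat M.L1 ψ π} :=
  Set.ext fun π => and_congr_right fun _ => pEval_eq_T_iff M.L ψ π

/-- Pr_{≥θ}(X Φ) evaluates to T in the qDTMC M iff s_init satisfies it in
the binary DTMC M⁽¹⁾ (every ? relabeled to F). -/
theorem stmt1 {S AP : Type} [Fintype S] [Nonempty S] [Fintype AP]
    [MeasurableSpace S] [DiscreteMeasurableSpace S]
    (M : qDTMC S AP) (μ : Measure (ℕ → S)) (hμ : M.IsPathMeasure M.init μ)
    (Φ : SForm AP) (θ : ℝ) (hθ : θ ∈ Set.Icc (0 : ℝ) 1) :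
    ENNReal.ofReal θ ≤ μ {π : ℕ → S | M.IsPath M.init π ∧ pEval M.L (PForm.next Φ) π = TV.T} ↔
      ENNReal.ofReal θ ≤ μ {π : ℕ → S | M.IsPath M.init π ∧ pSat M.L1 (PForm.next Φ) π} := by
  rw [stmt1_general]
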